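/- arXiv:2604.25872 — 2 statements merged into one kernel-verified Lean document; each statement's English description precedes it below -/
import Mathlib

section
/- Assume the ground truth reward r_G satisfies the reward structure assumption, the initial parameters θ_0 satisfy the initial policy assumption (general-features case), and the feature vectors satisfy the negative-inner-product feature assumption. Let ε ∈ (0, Δ1), and suppose θ_t is the gradient flow maximizing V_G. Set α := −s / (26(‖φ(y_med)‖² − s/2)) ∈ (0, 1/13) and K := (26/r_G(y_med)²)^{13α/7} · (1 + ‖φ(y_med)‖² π_{θ_0}(y_med)² / (8(‖φ(y_⋆)‖² − s) A_G(y_⋆; θ_0))). Then any time t with V_G(θ_t) ≥ r_G(y_⋆) − ε satisfies t ≥ [r_G(y_med) · M'^{14/13 + α} · (1 − e^{−2(Δ1 − ε)})] / [4 B² (Δ1 + Δ2) K] · π_{θ_0}(y_⋆)^{−14/13 − α}. -/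
open scoped BigOperators RealInnerProductSpace

noncomputable def policy {Y : Type*} [Fintype Y] {D : ℕ}
    (φ : Y → EuclideanSpace ℝ (Fin D)) (θ : EuclideanSpace ℝ (Fin D)) (y : Y) : ℝ :=
  Real.exp ⟪φ y, θ⟫ / ∑ z, Real.exp ⟪φ z, θ⟫

noncomputable def expReward {Y : Type*} [Fintype Y] {D : ℕ}
    (φ : Y → EuclideanSpace ℝ (Fin D)) (r : Y → ℝ) (θ : EuclideanSpace ℝ (Fin D)) : ℝ :=
  ∑ y, policy φ θ y * r y

section model
variable {Y : Type*} [Fintype Y] {D : ℕ} (φ : Y → EuclideanSpace ℝ (Fin D)) (r : Y → ℝ)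

lemma policy_pos [Nonempty Y] (θ : EuclideanSpace ℝ (Fin D)) (y : Y) : 0 < policy φ θ y := by
  unfold policy
  have : 0 < ∑ z, Real.exp ⟪φ z, θ⟫ := Finset.sum_pos (fun _ _ => Real.exp_pos _) Finset.univ_nonempty
  positivity

lemma policy_sum [Nonempty Y] (θ : EuclideanSpace ℝ (Fin D)) : ∑ y, policy φ θ y = 1 := by
  unfold policy
  have : 0 < ∑ z, Real.exp ⟪φ z, θ⟫ := Finset.sum_pos (fun _ _ => Real.exp_pos _) Finset.univ_nonempty
  rw [← Finset.sum_div, div_self this.ne']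

/-- derivative of the policy along a curve -/
lemma policy_deriv [Nonempty Y] (θ : ℝ → EuclideanSpace ℝ (Fin D)) (g : EuclideanSpace ℝ (Fin D)) (t : ℝ)
    (h : HasDerivAt θ g t) (y : Y) :
    HasDerivAt (fun t => policy φ (θ t) y)
      (policy φ (θ t) y * (⟪φ y, g⟫ - ∑ z, policy φ (θ t) z * ⟪φ z, g⟫)) t := by
  have hpos : 0 < ∑ z, Real.exp ⟪φ z, θ t⟫ :=
    Finset.sum_pos (fun _ _ => Real.exp_pos _) Finset.univ_nonempty
  have hi : ∀ z, HasDerivAt (fun t => ⟪φ z, θ t⟫) ⟪φ z, g⟫ t := fun z => by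
    simpa using (hasDerivAt_const t (φ z)).inner ℝ h
  have he : ∀ z, HasDerivAt (fun t => Real.exp ⟪φ z, θ t⟫) (Real.exp ⟪φ z, θ t⟫ * ⟪φ z, g⟫) t :=
    fun z => (hi z).exp
  have hs : HasDerivAt (fun t => ∑ z, Real.exp ⟪φ z, θ t⟫) (∑ z, Real.exp ⟪φ z, θ t⟫ * ⟪φ z, g⟫) t :=
    HasDerivAt.fun_sum fun z _ => he z
  have := (he y).fun_div hs hpos.ne'
  unfold policy
  refine this.congr_deriv ?_
  have e : ∑ z, Real.exp ⟪φ z, θ t⟫ / (∑ z, Real.exp ⟪φ z, θ t⟫) * ⟪φ z, g⟫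
      = (∑ z, Real.exp ⟪φ z, θ t⟫ * ⟪φ z, g⟫) / (∑ z, Real.exp ⟪φ z, θ t⟫) := by
    rw [Finset.sum_div]
    exact Finset.sum_congr rfl fun z _ => by ring
  rw [e]
  field_simp

lemma expReward_deriv [Nonempty Y] (θ : ℝ → EuclideanSpace ℝ (Fin D)) (g : EuclideanSpace ℝ (Fin D)) (t : ℝ)
    (h : HasDerivAt θ g t) :
    HasDerivAt (fun t => expReward φ r (θ t))
      ⟪∑ y, (policy φ (θ t) y * (r y - expReward φ r (θ t))) • φ y, g⟫ t := by
  have := HasDerivAt.fun_sum (u := Finset.univ)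
    fun y (_ : y ∈ Finset.univ) => (policy_deriv φ θ g t h y).mul_const (r y)
  refine this.congr_deriv ?_
  symm
  unfold expReward
  rw [sum_inner]
  simp_rw [real_inner_smul_left]
  set V := ∑ y, policy φ (θ t) y * r y with hV
  set N := ∑ z, policy φ (θ t) z * ⟪φ z, g⟫ with hN
  have e1 : ∀ y, policy φ (θ t) y * (r y - V) * ⟪φ y, g⟫
      = policy φ (θ t) y * r y * ⟪φ y, g⟫ - V * (policy φ (θ t) y * ⟪φ y, g⟫) := fun y => by ring
  have e2 : ∀ y, policy φ (θ t) y * (⟪φ y, g⟫ - N) * r y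
      = policy φ (θ t) y * r y * ⟪φ y, g⟫ - N * (policy φ (θ t) y * r y) := fun y => by ring
  simp_rw [e1, e2, Finset.sum_sub_distrib, ← Finset.mul_sum]
  rw [← hV, ← hN, mul_comm]

lemma expReward_grad [Nonempty Y] (θ : EuclideanSpace ℝ (Fin D)) :
    gradient (expReward φ r) θ = ∑ y, (policy φ θ y * (r y - expReward φ r θ)) • φ y := by
  have hpos : ∀ θ, (∑ z, Real.exp ⟪φ z, θ⟫) ≠ 0 := fun θ =>
    (Finset.sum_pos (fun _ _ => Real.exp_pos _) Finset.univ_nonempty).ne'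
  have hd : DifferentiableAt ℝ (expReward φ r) θ := by
    have e : expReward φ r = fun θ => ∑ y, Real.exp ⟪φ y, θ⟫ / (∑ z, Real.exp ⟪φ z, θ⟫) * r y := rfl
    rw [e]
    refine DifferentiableAt.fun_sum fun y _ => ?_
    have h0 : ∀ y, DifferentiableAt ℝ (fun θ => Real.exp ⟪φ y, θ⟫) θ := fun y =>
      ((differentiableAt_const _).inner ℝ differentiableAt_id).exp
    have h2 : DifferentiableAt ℝ (fun θ => ∑ z, Real.exp ⟪φ z, θ⟫) θ :=
      DifferentiableAt.fun_sum fun z _ => h0 z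
    simp_rw [div_eq_mul_inv]
    exact ((h0 y).fun_mul (h2.fun_inv (hpos θ))).mul_const (r y)
  refine ext_inner_right ℝ fun v => ?_
  have h1 : HasDerivAt (fun t : ℝ => θ + t • v) v 0 := by
    simpa using ((hasDerivAt_id (0:ℝ)).smul_const v).const_add θ
  have h2 := expReward_deriv φ r (fun t : ℝ => θ + t • v) v 0 h1
  have h3 : HasFDerivAt (expReward φ r) (fderiv ℝ (expReward φ r) θ) ((fun t : ℝ => θ + t • v) 0) := by
    simpa using hd.hasFDerivAt
  have h4 := h3.comp_hasDerivAt (0:ℝ) h1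
  have h5 := h2.unique h4
  simp only [zero_smul, add_zero] at h5
  rw [h5, gradient, InnerProductSpace.toDual_symm_apply]

end model


set_option maxHeartbeats 1000000 in
lemma E_bound (a c σ Q p m b A Δ1 Δ2 κ S : ℝ) (ha : 0 ≤ a) (hc : 0 ≤ c) (hσ : 0 ≤ σ)
    (haQ : a ≤ Q) (hcQ : c ≤ Q) (hσQ : σ ≤ Q) (hp : 0 < p) (hm : 0 < m) (hb : 0 < b)
    (hsum : p + m + b = 1) (hpu : p ≤ 0.028) (hbu : b ≤ 0.1) (hΔ1 : 0 < Δ1) (hΔ2 : 0 < Δ2)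
    (hA : A = b * Δ2 - p * Δ1) (hA0 : 0 ≤ A) (hκ0 : 0 ≤ κ) (hκ : κ ≤ 2 / 7)
    (hS : S ≤ c * b ^ 2 * Δ2) :
    ((a * p * (A + Δ1) - σ * m * A)
      - (p * (a * p * (A + Δ1) - σ * m * A) + m * (c * m * A - σ * p * (A + Δ1)) - S)) * b
      + κ * (S + b * (p * (a * p * (A + Δ1) - σ * m * A) + m * (c * m * A - σ * p * (A + Δ1)) - S))
      ≤ b * (-(0.15 * c * A) + 2.4 * p * Q * (Δ1 + Δ2)) := by
  have hS' : S ≤ c * b * (A + p * Δ1) := by rw [hA]; linarith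
  have hk : 0 ≤ b * (1 - κ) + κ := by nlinarith
  have h1 : (b * (1 - κ) + κ) * S ≤ (b * (1 - κ) + κ) * (c * b * (A + p * Δ1)) :=
    mul_le_mul_of_nonneg_left hS' hk
  have hkk : b * (1 - κ) + κ ≤ 0.1 * (1 - κ) + κ := by nlinarith
  have hQ : 0 ≤ Q := hc.trans hcQ
  have hAD : A + Δ1 ≤ Δ1 + Δ2 := by rw [hA]; nlinarith
  have hAD0 : 0 < A + Δ1 := by linarith
  have hm2 : 0.76 ≤ m ^ 2 := by nlinarith
  -- bracket
  have h2 : (a * p * (A + Δ1) - σ * m * A)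
      - (1 - κ) * (p * (a * p * (A + Δ1) - σ * m * A) + m * (c * m * A - σ * p * (A + Δ1)))
      + (b * (1 - κ) + κ) * (c * (A + p * Δ1)) ≤ (-(0.15 * c * A) + 2.4 * p * Q * (Δ1 + Δ2)) := by
    have e1 : a * p * (A + Δ1) * (1 - (1 - κ) * p) ≤ p * (Q * (Δ1 + Δ2)) := by
      have : a * (A + Δ1) ≤ Q * (Δ1 + Δ2) := by gcongr
      have h3 : a * p * (A + Δ1) ≤ p * (Q * (Δ1 + Δ2)) := by nlinarith
      have h4 : 0 ≤ a * p * (A + Δ1) * ((1 - κ) * p) := by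
        have : 0 ≤ 1 - κ := by linarith
        positivity
      linarith
    have e2 : (1 - κ) * m * (σ * p * (A + Δ1)) ≤ p * (Q * (Δ1 + Δ2)) := by
      have : σ * (A + Δ1) ≤ Q * (Δ1 + Δ2) := by gcongr
      have h3 : σ * p * (A + Δ1) ≤ p * (Q * (Δ1 + Δ2)) := by nlinarith
      have h4 : 0 ≤ σ * p * (A + Δ1) := by positivity
      have h5 : (1 - κ) * m ≤ 1 := by nlinarith
      nlinarith
    have e3 : 0 ≤ σ * m * A * (1 - (1 - κ) * p) := by
      have : 0 ≤ 1 - (1 - κ) * p := by linarith [mul_nonneg hκ0 hp.le]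
      positivity
    have e4 : (b * (1 - κ) + κ) * (c * (p * Δ1)) ≤ 0.4 * (p * (Q * (Δ1 + Δ2))) := by
      have : c * Δ1 ≤ Q * (Δ1 + Δ2) := by gcongr; linarith
      have h3 : c * (p * Δ1) ≤ p * (Q * (Δ1 + Δ2)) := by nlinarith
      have h4 : 0 ≤ c * (p * Δ1) := by positivity
      have h5 : b * (1 - κ) + κ ≤ 0.4 := by linarith
      nlinarith
    have e5 : (b * (1 - κ) + κ) * (c * A) - (1 - κ) * m ^ 2 * (c * A) ≤ -(0.15 * (c * A)) := by
      have h4 : 0 ≤ c * A := by positivity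
      have h5 : (b * (1 - κ) + κ) - (1 - κ) * m ^ 2 ≤ -0.15 := by nlinarith
      nlinarith
    linarith
  have h3 := mul_le_mul_of_nonneg_left h2 hb.le
  linarith

set_option maxHeartbeats 2000000 in
lemma core (p m b A S G : ℝ → ℝ) (a c σ Bm Δ1 Δ2 κ w M : ℝ)
    (ha : 0 ≤ a) (hc : 0 < c) (hσ : 0 ≤ σ) (hBm : 0 < Bm)
    (haQ : a ≤ Bm ^ 2) (hcQ : c ≤ Bm ^ 2) (hσQ : σ ≤ Bm ^ 2)
    (hp : ∀ t, 0 < p t) (hm : ∀ t, 0 < m t) (hb : ∀ t, 0 < b t)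
    (hsum : ∀ t, p t + m t + b t = 1)
    (hΔ1 : 0 < Δ1) (hΔ11 : Δ1 ≤ 1) (hΔ2 : 0 < Δ2)
    (hA : ∀ t, A t = b t * Δ2 - p t * Δ1)
    (hκ0 : 0 ≤ κ) (hκ : κ ≤ 2 / 7)
    (hS0 : ∀ t, 0 ≤ A t → S t ≤ c * b t ^ 2 * Δ2)
    (hG0 : ∀ t, 0 ≤ G t) (hG : ∀ t, 0 ≤ A t → G t ≤ 4 * Bm ^ 2 * (A t + p t * Δ1) ^ 2)
    (dp : ∀ t, 0 ≤ t → HasDerivAt p (p t * ((a * p t * (A t + Δ1) - σ * m t * A t)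
      - (p t * (a * p t * (A t + Δ1) - σ * m t * A t)
        + m t * (c * m t * A t - σ * p t * (A t + Δ1)) - S t))) t)
    (db : ∀ t, 0 ≤ t → HasDerivAt b (-S t - b t * (p t * (a * p t * (A t + Δ1) - σ * m t * A t)
        + m t * (c * m t * A t - σ * p t * (A t + Δ1)) - S t)) t)
    (dA : ∀ t, 0 ≤ t → HasDerivAt A (-G t) t)
    (hw : 0 < w) (hw1 : w ≤ 0.72) (hM : 0 < M) (hM1 : M ≤ 1)
    (hp0 : p 0 = M * w ^ 13) (hw6 : w ^ 6 * (Bm ^ 2 * (Δ1 + Δ2)) ≤ 21 / 1100 * c)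
    (hb0 : 2 * w ^ 7 ≤ b 0 * Δ2) (hb01 : b 0 ≤ 0.1)
    (t : ℝ) (ht : 0 ≤ t) (hAt : A t < 0) :
    ∃ P β : ℝ, 0 < P ∧ 0 < β ∧ P ≤ p 0 * (β / b 0) ^ κ ∧ β * Δ2 ≤ 1.14 * w ^ 7
      ∧ 1 ≤ 33 * Bm ^ 2 * (Δ1 + Δ2) * P * t := by
  have hw6' : w ^ 6 ≤ 0.1394 := by
    calc w ^ 6 ≤ 0.72 ^ 6 := by gcongr
      _ ≤ _ := by norm_num
  have hw7' : w ^ 7 ≤ 0.1004 := by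
    calc w ^ 7 ≤ 0.72 ^ 7 := by gcongr
      _ ≤ _ := by norm_num
  have hw7p : 0 < w ^ 7 := by positivity
  have hw6p : 0 < w ^ 6 := by positivity
  have hp0w : p 0 ≤ w ^ 7 * w ^ 6 := by
    rw [hp0]
    have : w ^ 7 * w ^ 6 = w ^ 13 := by ring
    rw [this]
    have : 0 < w ^ 13 := by positivity
    nlinarith
  have hp0s : p 0 ≤ 0.1394 * w ^ 7 := by nlinarith
  have hp0s' : p 0 ≤ 0.014 := by linarith
  set D := Δ1 + Δ2 with hD
  have hDp : 0 < D := by positivity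
  set Q := Bm ^ 2 with hQ
  have hQp : 0 < Q := by positivity
  have hA0 : w ^ 7 < A 0 := by rw [hA]; linarith [mul_le_of_le_one_right (hp 0).le hΔ11]
  have hcA : ContinuousOn A (Set.Icc 0 t) := fun x hx => (dA x hx.1).continuousAt.continuousWithinAt
  have hcp : ∀ x y, 0 ≤ x → ContinuousOn p (Set.Icc x y) :=
    fun x y hx z hz => (dp z (hx.trans hz.1)).continuousAt.continuousWithinAt
  have hcb : ∀ x y, 0 ≤ x → ContinuousOn b (Set.Icc x y) :=
    fun x y hx z hz => (db z (hx.trans hz.1)).continuousAt.continuousWithinAt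
  have hanti : AntitoneOn A (Set.Ici 0) := by
    apply antitoneOn_of_deriv_nonpos (convex_Ici 0)
    · exact fun x hx => (dA x hx).continuousAt.continuousWithinAt
    · intro x hx
      rw [interior_Ici] at hx
      exact (dA x (le_of_lt hx)).differentiableAt.differentiableWithinAt
    · intro x hx
      rw [interior_Ici] at hx
      rw [(dA x (le_of_lt hx)).deriv]
      linarith [hG0 x]
  obtain ⟨T, hT, hAT⟩ : ∃ T ∈ Set.Icc 0 t, A T = w ^ 7 :=
    intermediate_value_Icc' ht hcA ⟨by linarith, hA0.le⟩
  obtain ⟨T1, hT1, hAT1⟩ : ∃ T1 ∈ Set.Icc T t, A T1 = 0 :=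
    intermediate_value_Icc' hT.2 (hcA.mono (Set.Icc_subset_Icc_left hT.1)) ⟨hAt.le, by rw [hAT]; exact hw7p.le⟩
  have hT0 : 0 ≤ T := hT.1
  -- instant estimate
  have inst : ∀ k x, 0 ≤ k → k ≤ 2 / 7 → 0 ≤ A x → p x ≤ 0.028 → b x ≤ 0.1 →
      ((a * p x * (A x + Δ1) - σ * m x * A x)
      - (p x * (a * p x * (A x + Δ1) - σ * m x * A x)
        + m x * (c * m x * A x - σ * p x * (A x + Δ1)) - S x)) * b x
      + k * (S x + b x * (p x * (a * p x * (A x + Δ1) - σ * m x * A x)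
        + m x * (c * m x * A x - σ * p x * (A x + Δ1)) - S x))
      ≤ b x * (-(0.15 * c * A x) + 2.4 * p x * Q * D) := by
    intro k x hk0 hk hAx hpx hbx
    exact E_bound a c σ Q (p x) (m x) (b x) (A x) Δ1 Δ2 k (S x) ha hc.le hσ haQ hcQ hσQ (hp x) (hm x)
      (hb x) (hsum x) hpx hbx hΔ1 hΔ2 (hA x) hAx hk0 hk (hS0 x hAx)
  have inst0 : ∀ x, 0 ≤ A x → p x ≤ 0.028 → b x ≤ 0.1 →
      ((a * p x * (A x + Δ1) - σ * m x * A x)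
      - (p x * (a * p x * (A x + Δ1) - σ * m x * A x)
        + m x * (c * m x * A x - σ * p x * (A x + Δ1)) - S x))
      ≤ (-(0.15 * c * A x) + 2.4 * p x * Q * D) := by
    intro x hAx hpx hbx
    have := inst 0 x le_rfl (by norm_num) hAx hpx hbx
    rw [zero_mul, add_zero, mul_comm] at this
    exact le_of_mul_le_mul_left this (hb x)
  have hb_of : ∀ x, 0 ≤ x → p x ≤ p 0 → b x ≤ 0.1 := by
    intro x hx hpx
    have h1 : A x ≤ A 0 := hanti (Set.mem_Ici.2 le_rfl) hx hx
    rw [hA, hA] at h1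
    have h2 : b x * Δ2 ≤ b 0 * Δ2 := by linarith [mul_le_mul_of_nonneg_right hpx hΔ1.le]
    exact (le_of_mul_le_mul_right h2 hΔ2).trans hb01
  have small : ∀ x, p x ≤ p 0 → w ^ 7 ≤ A x → -(0.15 * c * A x) + 2.4 * p x * Q * D < 0 := by
    intro x hpx hAx
    have h1 : p x * (Q * D) ≤ w ^ 7 * (21 / 1100 * c) := by
      calc p x * (Q * D) ≤ (w ^ 7 * w ^ 6) * (Q * D) := by gcongr; linarith
        _ = w ^ 7 * (w ^ 6 * (Q * D)) := by ring
        _ ≤ _ := by gcongr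
    have h2 : w ^ 7 * c ≤ A x * c := by gcongr
    have h3 : 0 < w ^ 7 * c := by positivity
    linarith
  have hAge : ∀ x ∈ Set.Icc 0 T, w ^ 7 ≤ A x := by
    intro x hx
    rw [← hAT]
    exact hanti hx.1 hT0 hx.2
  have hple : ∀ ⦃x⦄, x ∈ Set.Icc 0 T → p x ≤ p 0 := by
    apply image_le_of_deriv_right_lt_deriv_boundary (B := fun _ => p 0) (B' := fun _ => 0)
      (hcp 0 T le_rfl) (fun x hx => (dp x hx.1).hasDerivWithinAt) le_rfl
      (fun x => hasDerivAt_const x _)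
    intro x hx hpx
    have hpx' : p x ≤ p 0 := hpx.le
    have hAx := hAge x ⟨hx.1, hx.2.le⟩
    have h1 := inst0 x (hw7p.le.trans hAx) (by linarith) (hb_of x hx.1 hpx')
    have h2 := small x hpx' hAx
    exact mul_neg_of_pos_of_neg (hp x) (by linarith)
  -- log monotone
  have hlog : Real.log (p T) - κ * Real.log (b T) ≤ Real.log (p 0) - κ * Real.log (b 0) := by
    have hder : ∀ x, 0 ≤ x → HasDerivAt (fun x => Real.log (p x) - κ * Real.log (b x)) _ x :=
      fun x hx => ((dp x hx).log (hp x).ne').sub (((db x hx).log (hb x).ne').const_mul κ)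
    have : AntitoneOn (fun x => Real.log (p x) - κ * Real.log (b x)) (Set.Icc 0 T) := by
      apply antitoneOn_of_deriv_nonpos (convex_Icc 0 T)
      · exact fun x hx => (hder x hx.1).continuousAt.continuousWithinAt
      · intro x hx
        rw [interior_Icc] at hx
        exact (hder x hx.1.le).differentiableAt.differentiableWithinAt
      · intro x hx
        rw [interior_Icc] at hx
        have hx' : x ∈ Set.Icc 0 T := ⟨hx.1.le, hx.2.le⟩
        rw [(hder x hx.1.le).deriv]
        have h1 := inst κ x hκ0 hκ (hw7p.le.trans (hAge x hx')) (by linarith [hple hx'])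
          (hb_of x hx'.1 (hple hx'))
        have h2 := small x (hple hx') (hAge x hx')
        have h3 : b x * (-(0.15 * c * A x) + 2.4 * p x * Q * D) ≤ 0 :=
          mul_nonpos_of_nonneg_of_nonpos (hb x).le h2.le
        have hpx := (hp x).ne'
        have hbx := hb x
        rw [mul_div_cancel_left₀ _ hpx]
        refine le_of_mul_le_mul_right ?_ hbx
        rw [zero_mul, sub_mul, mul_assoc κ, div_mul_cancel₀ _ hbx.ne']
        linarith
    exact this ⟨le_rfl, hT0⟩ ⟨hT0, le_rfl⟩ hT0
  have hPle : p T ≤ p 0 := hple ⟨hT0, le_rfl⟩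
  have hbT : b T * Δ2 ≤ 1.14 * w ^ 7 := by
    have := hA T
    rw [hAT] at this
    linarith [mul_le_of_le_one_right (hp T).le hΔ11]
  refine ⟨p T, b T, hp T, hb T, ?_, hbT, ?_⟩
  · rw [← Real.log_le_log_iff (hp T) (mul_pos (hp 0) (Real.rpow_pos_of_pos (div_pos (hb T) (hb 0)) _)),
      Real.log_mul (hp 0).ne' (Real.rpow_pos_of_pos (div_pos (hb T) (hb 0)) _).ne',
      Real.log_rpow (div_pos (hb T) (hb 0)), Real.log_div (hb T).ne' (hb 0).ne']
    linarith
  -- phase 2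
  set P := p T with hP
  have hPp : 0 < P := hp T
  by_contra hcon
  push Not at hcon
  have hlen : 33 * Q * D * P * (T1 - T) < 1 := by
    have : 33 * Q * D * P * (T1 - T) ≤ 33 * Q * D * P * t := by
      gcongr
      linarith [hT1.2]
    linarith
  have hAge2 : ∀ x ∈ Set.Icc T T1, 0 ≤ A x := by
    intro x hx
    rw [← hAT1]
    exact hanti (hT0.trans hx.1) (hT0.trans hT1.1) hx.2
  have hAle2 : ∀ x ∈ Set.Icc T T1, A x ≤ w ^ 7 := by
    intro x hx
    rw [← hAT]
    exact hanti hT0 (hT0.trans hx.1) hx.1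
  have hbar : ∀ x ∈ Set.Icc T T1, P + 10 * Q * D * P ^ 2 * (x - T) ≤ 2 * P := by
    intro x hx
    have : 33 * Q * D * P * (x - T) ≤ 33 * Q * D * P * (T1 - T) := by
      gcongr
      exact hx.2
    have h4 : P * (33 * Q * D * P * (x - T)) ≤ P * 1 :=
      mul_le_mul_of_nonneg_left (by linarith) hPp.le
    linarith
  have hp2 : ∀ ⦃x⦄, x ∈ Set.Icc T T1 → p x ≤ P + 10 * Q * D * P ^ 2 * (x - T) := by
    apply image_le_of_deriv_right_lt_deriv_boundary (B := fun x => P + 10 * Q * D * P ^ 2 * (x - T))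
      (B' := fun _ => 10 * Q * D * P ^ 2)
      (hcp T T1 hT0) (fun x hx => (dp x (hT0.trans hx.1)).hasDerivWithinAt) (by simp [hP])
      (fun x => by
        have := (((hasDerivAt_id x).sub_const T).const_mul (10 * Q * D * P ^ 2)).const_add P
        simpa using this)
    intro x hx hpx
    have hx' : x ∈ Set.Icc T T1 := ⟨hx.1, hx.2.le⟩
    have hpx' : p x ≤ 2 * P := hpx.le.trans (hbar x hx')
    have hbx : b x ≤ 0.1 := by
      have h1 := hAle2 x hx'
      rw [hA] at h1
      have h2 : b x * Δ2 ≤ b 0 * Δ2 := by linarith [mul_le_of_le_one_right (hp x).le hΔ11]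
      exact (le_of_mul_le_mul_right h2 hΔ2).trans hb01
    have h1 := inst0 x (hAge2 x hx') (by linarith) hbx
    have h2 : 0 ≤ 0.15 * c * A x := mul_nonneg (by positivity) (hAge2 x hx')
    have hpp := hp x
    calc p x * _ ≤ p x * (2.4 * p x * Q * D) := by gcongr; linarith
      _ = 2.4 * Q * D * p x ^ 2 := by ring
      _ ≤ 2.4 * Q * D * (2 * P) ^ 2 := by gcongr
      _ < _ := by
        have : 0 < Q * D * P ^ 2 := by positivity
        linarith
  have hA2 : ∀ ⦃x⦄, x ∈ Set.Icc T T1 → -A x ≤ -(2 * P * D) + 65 * Q * D ^ 2 * P ^ 2 * (x - T) := by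
    apply image_le_of_deriv_right_lt_deriv_boundary (f' := fun x => G x)
      (B := fun x => -(2 * P * D) + 65 * Q * D ^ 2 * P ^ 2 * (x - T))
      (B' := fun _ => 65 * Q * D ^ 2 * P ^ 2)
      (fun z hz => (dA z (hT0.trans hz.1)).continuousAt.continuousWithinAt.neg)
      (fun x hx => by simpa using (dA x (hT0.trans hx.1)).neg.hasDerivWithinAt) ?_
      (fun x => by
        have := (((hasDerivAt_id x).sub_const T).const_mul (65 * Q * D ^ 2 * P ^ 2)).const_add (-(2 * P * D))
        simpa using this)
    · intro x hx hpx
      rw [Pi.neg_apply] at hpx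
      have hx' : x ∈ Set.Icc T T1 := ⟨hx.1, hx.2.le⟩
      have hpx' : p x ≤ 2 * P := (hp2 hx').trans (hbar x hx')
      have hA' : A x ≤ 2 * P * D := by
        have : 0 ≤ 65 * Q * D ^ 2 * P ^ 2 * (x - T) := mul_nonneg (by positivity) (by linarith [hx.1])
        linarith
      have h0 := hAge2 x hx'
      have hpp := hp x
      have h3 : p x * Δ1 ≤ 2 * P * D := by
        gcongr
        linarith
      calc G x ≤ 4 * Q * (A x + p x * Δ1) ^ 2 := hG x h0
        _ ≤ 4 * Q * (2 * P * D + 2 * P * D) ^ 2 := by gcongr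
        _ < _ := by
          have : 0 < Q * D ^ 2 * P ^ 2 := by positivity
          linarith
    · rw [Pi.neg_apply, hAT]
      simp only [sub_self, mul_zero, add_zero, neg_le_neg_iff]
      have h1 : w ^ 6 * D * Q ≤ 21 / 1100 * Q := by linarith
      have h2 := le_of_mul_le_mul_right h1 hQp
      have h3 : P * D ≤ (w ^ 7 * w ^ 6) * D := by
        gcongr
        linarith
      have h4 : w ^ 7 * (w ^ 6 * D) ≤ w ^ 7 * (21 / 1100) := by gcongr
      linarith
  have h1 := hA2 ⟨hT1.1, le_rfl⟩
  rw [hAT1] at h1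
  have h2 : 0 < P * D := by positivity
  have h3 : 65 * Q * D ^ 2 * P ^ 2 * (T1 - T) < 2 * P * D := by
    have : 65 * Q * D ^ 2 * P ^ 2 * (T1 - T) = (65 / 33) * (P * D) * (33 * Q * D * P * (T1 - T)) := by ring
    rw [this]
    have h4 : (65 / 33) * (P * D) * (33 * Q * D * P * (T1 - T)) < (65 / 33) * (P * D) * 1 :=
      mul_lt_mul_of_pos_left hlen (by positivity)
    linarith
  linarith
lemma final_rpow (p0 M c rm Q D Δ2 b0 β P κ α K K2 w t E : ℝ) (hp0 : p0 = M * w ^ 13) (hw : 0 < w)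
    (hM : 0 < M) (hrm : 0 < rm) (hQ : 0 < Q) (hc : 0 < c) (hcQ : c ≤ Q) (hD : rm ≤ D) (hΔ2 : rm ≤ Δ2)
    (hMle : M ≤ c * rm ^ ((2:ℝ)/7) / (40 * Q * D))
    (hb0 : 0.05 * rm ≤ b0) (hβ : 0 < β) (hβΔ : β * Δ2 ≤ 1.14 * w ^ 7)
    (hκ : κ = 1 / 7 + 13 * α / 7) (hα : 0 ≤ α) (hK : K = (26 / rm ^ 2) ^ (13 * α / 7) * K2) (hK2 : 1 ≤ K2)
    (hP : P ≤ p0 * (β / b0) ^ κ) (ht : 0 ≤ t) (hPt : 1 ≤ 33 * Q * D * P * t) (hE : E ≤ 1) :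
    rm * M ^ ((14:ℝ)/13 + α) * E / (4 * Q * D * K) * p0 ^ (-(14:ℝ)/13 - α) ≤ t := by
  have hb0p : 0 < b0 := by linarith [mul_pos (by norm_num : (0:ℝ) < 0.05) hrm]
  have hDp : 0 < D := by linarith
  have hp0p : 0 < p0 := by rw [hp0]; positivity
  set X := w ^ (14 + 13 * α) with hX
  have hXp : 0 < X := Real.rpow_pos_of_pos hw _
  have e1 : M ^ ((14:ℝ)/13 + α) * p0 ^ (-(14:ℝ)/13 - α) = X⁻¹ := by
    have h13 : (w ^ 13 : ℝ) = w ^ (13:ℝ) := by norm_cast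
    rw [hp0, Real.mul_rpow hM.le (by positivity), ← mul_assoc, ← Real.rpow_add hM, h13,
      ← Real.rpow_mul hw.le, hX, ← Real.rpow_neg hw.le]
    rw [show (14:ℝ) / 13 + α + (-14 / 13 - α) = 0 by ring, Real.rpow_zero, one_mul]
    congr 1
    ring
  set F := (26 / rm ^ 2) ^ (13 * α / 7) with hF
  have hFp : 0 < F := Real.rpow_pos_of_pos (by positivity) _
  have hKp : F ≤ K := by rw [hK]; nlinarith
  have hratio : β / b0 ≤ 26 / rm ^ 2 * w ^ 7 := by
    rw [div_mul_eq_mul_div, div_le_div_iff₀ hb0p (by positivity)]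
    have h1 : β * rm ≤ 1.14 * w ^ 7 := by nlinarith
    have h2 : β * rm * rm ≤ 1.14 * w ^ 7 * rm := by gcongr
    have h3 : w ^ 7 * (0.05 * rm) ≤ w ^ 7 * b0 := by gcongr
    nlinarith
  have hκ0 : 0 ≤ κ := by rw [hκ]; positivity
  have e2 : (β / b0) ^ κ ≤ (26 / rm ^ 2) ^ ((1:ℝ)/7) * F * (w ^ (1 + 13 * α)) := by
    calc (β / b0) ^ κ ≤ (26 / rm ^ 2 * w ^ 7) ^ κ := by
          apply Real.rpow_le_rpow (by positivity) hratio hκ0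
      _ = _ := by
        have h7 : (w ^ 7 : ℝ) = w ^ (7:ℝ) := by norm_cast
        rw [Real.mul_rpow (by positivity) (by positivity), h7, ← Real.rpow_mul hw.le, hF,
          ← Real.rpow_add (by positivity), hκ]
        congr 2
        ring
  have e3 : (26 / rm ^ 2) ^ ((1:ℝ)/7) * rm ^ ((2:ℝ)/7) ≤ 1.6 := by
    have h2 : (rm ^ 2 : ℝ) = rm ^ (2:ℝ) := by norm_cast
    rw [Real.div_rpow (by norm_num) (by positivity), h2, ← Real.rpow_mul hrm.le,
      show (2:ℝ) * (1 / 7) = 2 / 7 by norm_num, div_mul_cancel₀ _ (Real.rpow_pos_of_pos hrm _).ne']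
    calc (26:ℝ) ^ ((1:ℝ)/7) ≤ (1.6 ^ (7:ℕ)) ^ ((1:ℝ)/7) := by
          apply Real.rpow_le_rpow <;> norm_num
      _ = 1.6 := by
        rw [← Real.rpow_natCast, ← Real.rpow_mul (by norm_num)]
        norm_num
  set H := (26 / rm ^ 2) ^ ((1:ℝ)/7) with hH
  have hHp : 0 < H := Real.rpow_pos_of_pos (by positivity) _
  have e4 : M * H * rm ≤ 0.04 := by
    have h1 : M * (40 * Q * D) ≤ c * rm ^ ((2:ℝ)/7) := by
      rwa [le_div_iff₀ (by positivity)] at hMle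
    have h2 : M * (40 * Q * D) * H ≤ c * 1.6 := by
      calc _ ≤ c * rm ^ ((2:ℝ)/7) * H := by gcongr
        _ = c * (H * rm ^ ((2:ℝ)/7)) := by ring
        _ ≤ _ := by gcongr
    have h3 : Q * (M * H * rm) ≤ Q * 0.04 := by
      have : Q * (M * H * rm) ≤ Q * (M * H * D) := by gcongr
      nlinarith
    exact le_of_mul_le_mul_left h3 hQ
  have e5 : P * rm ≤ 0.04 * F * X := by
    have hw14 : w ^ 13 * w ^ (1 + 13 * α) = X := by
      have h13 : (w ^ 13 : ℝ) = w ^ (13:ℝ) := by norm_cast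
      rw [h13, ← Real.rpow_add hw, hX]
      congr 1
      ring
    calc P * rm ≤ p0 * (H * F * (w ^ (1 + 13 * α))) * rm := by
          gcongr
          exact hP.trans (by gcongr)
      _ = M * H * rm * F * (w ^ 13 * w ^ (1 + 13 * α)) := by rw [hp0]; ring
      _ = M * H * rm * F * X := by rw [hw14]
      _ ≤ _ := by gcongr
  have hKpos : 0 < K := hFp.trans_le hKp
  have e6 : rm ≤ t * (4 * Q * D * K * X) := by
    calc rm = rm * 1 := by ring
      _ ≤ rm * (33 * Q * D * P * t) := by gcongr
      _ = 33 * Q * D * t * (P * rm) := by ring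
      _ ≤ 33 * Q * D * t * (0.04 * F * X) := by gcongr
      _ ≤ 33 * Q * D * t * (0.04 * K * X) := by gcongr
      _ ≤ _ := by
        have : 0 ≤ Q * D * t * K * X := by positivity
        nlinarith
  calc rm * M ^ ((14:ℝ)/13 + α) * E / (4 * Q * D * K) * p0 ^ (-(14:ℝ)/13 - α)
      = rm * E / (4 * Q * D * K) * (M ^ ((14:ℝ)/13 + α) * p0 ^ (-(14:ℝ)/13 - α)) := by ring
    _ = rm * E / (4 * Q * D * K * X) := by rw [e1]; field_simp
    _ ≤ rm * 1 / (4 * Q * D * K * X) := by gcongr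
    _ ≤ t := by rw [div_le_iff₀ (by positivity), mul_one]; exact e6

set_option maxHeartbeats 2000000 in
theorem slow_opt_neg_inner {Y : Type*} [Fintype Y] {D : ℕ}
    (φ : Y → EuclideanSpace ℝ (Fin D)) (hφ : ∀ y, φ y ≠ 0)
    (rG : Y → ℝ) (hrG : ∀ y, rG y ∈ Set.Icc (-1 : ℝ) 1)
    (ystar ymed ybad : Y) (Ybad : Finset Y) (hybad : ybad ∈ Ybad)
    (hsm : ystar ≠ ymed) (hsb : ystar ∉ Ybad) (hmb : ymed ∉ Ybad)
    (hcover : ∀ y : Y, y = ystar ∨ y = ymed ∨ y ∈ Ybad)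
    (hr1 : rG ymed < rG ystar) (hr2 : 0 < rG ymed)
    (hr3 : ∀ y ∈ Ybad, rG y ≤ 0)
    (hr4 : ∀ y ∈ Ybad, rG y = rG ybad)
    (Δ1 Δ2 : ℝ) (hΔ1 : Δ1 = rG ystar - rG ymed) (hΔ2 : Δ2 = rG ymed - rG ybad)
    (s : ℝ) (hs : s = ⟪φ ystar, φ ymed⟫) (hsneg : s < 0)
    (horthbad : ∀ yb ∈ Ybad, ∀ y : Y, y ≠ yb → ⟪φ yb, φ y⟫ = 0)
    (hnormbad : ∀ yb ∈ Ybad, ‖φ yb‖ ≤ ‖φ ymed‖)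
    (θt : ℝ → EuclideanSpace ℝ (Fin D))
    (hflow : ∀ t : ℝ, 0 ≤ t → HasDerivAt θt (gradient (expReward φ rG) (θt t)) t)
    (B M' : ℝ)
    (hB : B = Finset.univ.sup' ⟨ystar, Finset.mem_univ ystar⟩ fun y => ‖φ y‖)
    (hM' : M' = min 1 (‖φ ymed‖ ^ 2 * rG ymed ^ ((2:ℝ)/7) / (40 * B ^ 2 * (Δ1 + Δ2))))
    (hinit1 : policy φ (θt 0) ystar
        < min (M' * (min 0.01 ((21 * ‖φ ymed‖ ^ 2 / (1100 * B ^ 2 * (Δ1 + Δ2))) ^ ((7:ℝ)/3))) ^ ((13:ℝ)/14))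
            (‖φ ymed‖ / ‖φ ystar‖ * policy φ (θt 0) ymed))
    (hinit2 : max (2 * policy φ (θt 0) ystar ^ ((7:ℝ)/13) / (Δ2 * M' ^ ((7:ℝ)/13)))
        (0.05 * rG ymed) ≤ ∑ y ∈ Ybad, policy φ (θt 0) y)
    (hinit3 : ∑ y ∈ Ybad, policy φ (θt 0) y ≤ 0.1 * rG ymed)
    (α K : ℝ)
    (hα : α = -s / (26 * (‖φ ymed‖ ^ 2 - s / 2)))
    (hK : K = (26 / rG ymed ^ 2) ^ (13 * α / 7)
        * (1 + ‖φ ymed‖ ^ 2 * policy φ (θt 0) ymed ^ 2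
            / (8 * (‖φ ystar‖ ^ 2 - s) * (rG ystar - expReward φ rG (θt 0)))))
    (ε : ℝ) (hε : ε ∈ Set.Ioo 0 Δ1)
    (t : ℝ) (ht : 0 ≤ t)
    (hV : rG ystar - ε ≤ expReward φ rG (θt t)) :
    rG ymed * M' ^ ((14:ℝ)/13 + α) * (1 - Real.exp (-(2 * (Δ1 - ε))))
        / (4 * B ^ 2 * (Δ1 + Δ2) * K)
        * policy φ (θt 0) ystar ^ (-(14:ℝ)/13 - α) ≤ t := by
  classical
  have : Nonempty Y := ⟨ystar⟩
  have hsplit : ∀ f : Y → ℝ, ∑ y, f y = f ystar + f ymed + ∑ y ∈ Ybad, f y := by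
    intro f
    have hu : (Finset.univ : Finset Y) = insert ystar (insert ymed Ybad) := by
      ext y
      simpa using hcover y
    rw [hu, Finset.sum_insert, Finset.sum_insert hmb, add_assoc]
    simp [hsm, hsb]
  -- norms
  have hBle : ∀ y, ‖φ y‖ ≤ B := fun y => by
    rw [hB]
    exact Finset.le_sup' (fun y => ‖φ y‖) (Finset.mem_univ y)
  have hφm : 0 < ‖φ ymed‖ := norm_pos_iff.2 (hφ ymed)
  have hBp : 0 < B := hφm.trans_le (hBle ymed)
  have hc : 0 < ‖φ ymed‖ ^ 2 := by positivity
  have haQ : ‖φ ystar‖ ^ 2 ≤ B ^ 2 := by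
    have := hBle ystar
    gcongr
  have hcQ : ‖φ ymed‖ ^ 2 ≤ B ^ 2 := by
    have := hBle ymed
    gcongr
  have hσQ : -s ≤ B ^ 2 := by
    have h1 : |s| ≤ ‖φ ystar‖ * ‖φ ymed‖ := by rw [hs]; exact abs_real_inner_le_norm _ _
    have h2 : ‖φ ystar‖ * ‖φ ymed‖ ≤ B * B :=
      mul_le_mul (hBle _) (hBle _) (norm_nonneg _) hBp.le
    have h3 := neg_le_abs s
    nlinarith
  -- rewards
  have hrb : rG ybad ≤ 0 := hr3 ybad hybad
  have hΔ1p : 0 < Δ1 := by rw [hΔ1]; linarith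
  have hΔ11 : Δ1 ≤ 1 := by rw [hΔ1]; linarith [(hrG ystar).2]
  have hΔ2r : rG ymed ≤ Δ2 := by rw [hΔ2]; linarith
  have hΔ2p : 0 < Δ2 := hr2.trans_le hΔ2r
  have hrm1 : rG ymed ≤ 1 := (hrG ymed).2
  have hDp : 0 < Δ1 + Δ2 := by linarith
  -- scalar functions
  set p : ℝ → ℝ := fun t => policy φ (θt t) ystar with hp_def
  set m : ℝ → ℝ := fun t => policy φ (θt t) ymed with hm_def
  set b : ℝ → ℝ := fun t => ∑ y ∈ Ybad, policy φ (θt t) y with hb_def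
  set A : ℝ → ℝ := fun t => b t * Δ2 - p t * Δ1 with hA_def
  set S : ℝ → ℝ := fun t => ∑ y ∈ Ybad, policy φ (θt t) y * (policy φ (θt t) y * (Δ2 - A t) * ‖φ y‖ ^ 2)
    with hS_def
  set g : ℝ → EuclideanSpace ℝ (Fin D) := fun t => gradient (expReward φ rG) (θt t) with hg_def
  have hpp : ∀ t, 0 < p t := fun t => policy_pos φ _ _
  have hmp : ∀ t, 0 < m t := fun t => policy_pos φ _ _
  have hbp : ∀ t, 0 < b t := fun t => Finset.sum_pos (fun y _ => policy_pos φ _ _) ⟨ybad, hybad⟩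
  have hsum : ∀ t, p t + m t + b t = 1 := fun t => by
    rw [← policy_sum φ (θt t), hsplit]
  have hbad : ∀ y ∈ Ybad, rG y = rG ymed - Δ2 := fun y hy => by rw [hr4 y hy, hΔ2]; ring
  have hstar : rG ystar = rG ymed + Δ1 := by rw [hΔ1]; ring
  have hVA : ∀ t, expReward φ rG (θt t) = rG ymed - A t := fun t => by
    have e : expReward φ rG (θt t) = p t * rG ystar + m t * rG ymed + b t * (rG ymed - Δ2) := by
      unfold expReward
      rw [hsplit, hb_def, Finset.sum_mul]
      congr 1
      exact Finset.sum_congr rfl fun y hy => by rw [hbad y hy]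
    rw [e, hstar]
    have := hsum t
    have hm' : m t = 1 - p t - b t := by linarith
    rw [hm', hA_def]
    ring
  have hgrad : ∀ t, g t = ∑ y, (policy φ (θt t) y * (rG y - expReward φ rG (θt t))) • φ y :=
    fun t => expReward_grad φ rG (θt t)
  have hu : ∀ t y, ⟪φ y, g t⟫ = p t * (A t + Δ1) * ⟪φ y, φ ystar⟫ + m t * A t * ⟪φ y, φ ymed⟫
      + ∑ z ∈ Ybad, policy φ (θt t) z * (A t - Δ2) * ⟪φ y, φ z⟫ := by
    intro t y
    rw [hgrad, inner_sum]
    simp_rw [real_inner_smul_right]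
    rw [hsplit, hVA, hstar]
    congr 1
    · simp only [hp_def, hm_def]
      ring
    · exact Finset.sum_congr rfl fun z hz => by rw [hbad z hz]; ring
  have hus : ∀ t, ⟪φ ystar, g t⟫ = ‖φ ystar‖ ^ 2 * p t * (A t + Δ1) - (-s) * m t * A t := by
    intro t
    rw [hu, Finset.sum_eq_zero, real_inner_self_eq_norm_sq, ← hs]
    · ring
    · intro z hz
      rw [real_inner_comm, horthbad z hz ystar (fun h => hsb (h ▸ hz)), mul_zero]
  have hum : ∀ t, ⟪φ ymed, g t⟫ = ‖φ ymed‖ ^ 2 * m t * A t - (-s) * p t * (A t + Δ1) := by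
    intro t
    rw [hu, Finset.sum_eq_zero, real_inner_self_eq_norm_sq, real_inner_comm, ← hs]
    · ring
    · intro z hz
      rw [real_inner_comm, horthbad z hz ymed (fun h => hmb (h ▸ hz)), mul_zero]
  have hub : ∀ t, ∀ y ∈ Ybad, ⟪φ y, g t⟫ = -(policy φ (θt t) y * (Δ2 - A t) * ‖φ y‖ ^ 2) := by
    intro t y hy
    rw [hu, horthbad y hy ystar (fun h => hsb (h ▸ hy)), horthbad y hy ymed (fun h => hmb (h ▸ hy)),
      Finset.sum_eq_single y, real_inner_self_eq_norm_sq]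
    · ring
    · intro z hz hzy
      rw [horthbad y hy z hzy, mul_zero]
    · exact fun h => absurd hy h
  have hN : ∀ t, ∑ z, policy φ (θt t) z * ⟪φ z, g t⟫
      = p t * (‖φ ystar‖ ^ 2 * p t * (A t + Δ1) - (-s) * m t * A t)
        + m t * (‖φ ymed‖ ^ 2 * m t * A t - (-s) * p t * (A t + Δ1)) - S t := by
    intro t
    have e : ∑ z ∈ Ybad, policy φ (θt t) z * ⟪φ z, g t⟫ = -S t := by
      simp only [hS_def]
      rw [← Finset.sum_neg_distrib]
      exact Finset.sum_congr rfl fun z hz => by rw [hub t z hz]; ring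
    rw [hsplit, hus, hum, e]
    ring
  have hdpol : ∀ t, 0 ≤ t → ∀ y, HasDerivAt (fun t => policy φ (θt t) y)
      (policy φ (θt t) y * (⟪φ y, g t⟫ - ∑ z, policy φ (θt t) z * ⟪φ z, g t⟫)) t :=
    fun t ht y => policy_deriv φ θt (g t) t (hflow t ht) y
  have dp : ∀ t, 0 ≤ t → HasDerivAt p (p t * ((‖φ ystar‖ ^ 2 * p t * (A t + Δ1) - (-s) * m t * A t)
      - (p t * (‖φ ystar‖ ^ 2 * p t * (A t + Δ1) - (-s) * m t * A t)
        + m t * (‖φ ymed‖ ^ 2 * m t * A t - (-s) * p t * (A t + Δ1)) - S t))) t := by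
    intro t ht
    have := hdpol t ht ystar
    rw [hN, hus] at this
    exact this
  have db : ∀ t, 0 ≤ t → HasDerivAt b (-S t - b t * (p t * (‖φ ystar‖ ^ 2 * p t * (A t + Δ1) - (-s) * m t * A t)
        + m t * (‖φ ymed‖ ^ 2 * m t * A t - (-s) * p t * (A t + Δ1)) - S t)) t := by
    intro t ht
    have := HasDerivAt.fun_sum (u := Ybad) fun y (_ : y ∈ Ybad) => hdpol t ht y
    refine this.congr_deriv ?_
    rw [← hN]
    set N := ∑ z, policy φ (θt t) z * ⟪φ z, g t⟫
    simp only [hS_def, hb_def]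
    rw [← Finset.sum_neg_distrib, Finset.sum_mul, ← Finset.sum_sub_distrib]
    exact Finset.sum_congr rfl fun z hz => by rw [hub t z hz]; ring
  have dA : ∀ t, 0 ≤ t → HasDerivAt A (-(‖g t‖ ^ 2)) t := by
    intro t ht
    have h1 := expReward_deriv φ rG θt (g t) t (hflow t ht)
    rw [← hgrad t, real_inner_self_eq_norm_sq] at h1
    have h2 : A = fun t => rG ymed - expReward φ rG (θt t) := by
      funext t
      rw [hVA]
      ring
    rw [h2]
    exact h1.const_sub _
  have hAle : ∀ t, A t ≤ Δ2 := fun t => by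
    have h1 := hsum t
    have h2 := hpp t
    have h3 := hmp t
    have h4 : b t * Δ2 ≤ Δ2 := by nlinarith
    have h5 : 0 < p t * Δ1 := by positivity
    simp only [hA_def]
    linarith
  have hS0 : ∀ t, 0 ≤ A t → S t ≤ ‖φ ymed‖ ^ 2 * b t ^ 2 * Δ2 := by
    intro t hAt
    have h1 : ∀ y ∈ Ybad, policy φ (θt t) y * (policy φ (θt t) y * (Δ2 - A t) * ‖φ y‖ ^ 2)
        ≤ policy φ (θt t) y * (b t * Δ2 * ‖φ ymed‖ ^ 2) := by
      intro y hy
      have h2 : policy φ (θt t) y ≤ b t :=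
        Finset.single_le_sum (f := fun y => policy φ (θt t) y) (fun z _ => (policy_pos φ _ z).le) hy
      have h3 := hnormbad y hy
      have h4 := (policy_pos φ (θt t) y).le
      have h5 : 0 ≤ Δ2 - A t := by linarith [hAle t]
      have h6 := (hbp t).le
      gcongr
      linarith
    calc S t ≤ ∑ y ∈ Ybad, policy φ (θt t) y * (b t * Δ2 * ‖φ ymed‖ ^ 2) := Finset.sum_le_sum h1
      _ = b t * (b t * Δ2 * ‖φ ymed‖ ^ 2) := by rw [← Finset.sum_mul]
      _ = _ := by ring
  have hG : ∀ t, 0 ≤ A t → ‖g t‖ ^ 2 ≤ 4 * B ^ 2 * (A t + p t * Δ1) ^ 2 := by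
    intro t hAt
    have h1 : ‖g t‖ ≤ ∑ y, |policy φ (θt t) y * (rG y - expReward φ rG (θt t))| * B := by
      rw [hgrad]
      refine (norm_sum_le _ _).trans (Finset.sum_le_sum fun y _ => ?_)
      rw [norm_smul, Real.norm_eq_abs]
      exact mul_le_mul_of_nonneg_left (hBle y) (abs_nonneg _)
    rw [hsplit, hVA] at h1
    have e1 : |policy φ (θt t) ystar * (rG ystar - (rG ymed - A t))| = p t * (A t + Δ1) := by
      rw [hstar, abs_of_nonneg]
      · simp only [hp_def]
        ring
      · exact mul_nonneg (hpp t).le (by linarith)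
    have e2 : |policy φ (θt t) ymed * (rG ymed - (rG ymed - A t))| = m t * A t := by
      rw [abs_of_nonneg]
      · simp only [hm_def]
        ring
      · exact mul_nonneg (hmp t).le (by linarith)
    have e3 : ∑ y ∈ Ybad, |policy φ (θt t) y * (rG y - (rG ymed - A t))| * B = b t * (Δ2 - A t) * B := by
      simp only [hb_def]
      rw [Finset.sum_mul, Finset.sum_mul]
      refine Finset.sum_congr rfl fun y hy => ?_
      rw [hbad y hy, abs_of_nonpos]
      · ring
      · exact mul_nonpos_of_nonneg_of_nonpos (policy_pos φ _ _).le (by linarith [hAle t])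
    rw [e1, e2, e3] at h1
    have hAeq : A t = b t * Δ2 - p t * Δ1 := rfl
    have hkey : p t * (A t + Δ1) + m t * A t = b t * (Δ2 - A t) := by
      have hm' : m t = 1 - p t - b t := by linarith [hsum t]
      rw [hm']
      linarith
    have h2 : ‖g t‖ ≤ 2 * B * (A t + p t * Δ1) := by
      have h3 : b t * (Δ2 - A t) ≤ A t + p t * Δ1 := by
        have : 0 ≤ b t * A t := mul_nonneg (hbp t).le hAt
        linarith
      have h4 : b t * (Δ2 - A t) * B ≤ (A t + p t * Δ1) * B := by gcongr
      have h5 : p t * (A t + Δ1) * B + m t * A t * B = b t * (Δ2 - A t) * B := by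
        rw [← hkey]
        ring
      linarith
    calc ‖g t‖ ^ 2 ≤ (2 * B * (A t + p t * Δ1)) ^ 2 := by gcongr
      _ = _ := by ring
  -- initial conditions
  have hy0 : 0 < ‖φ ymed‖ ^ 2 * rG ymed ^ ((2:ℝ)/7) / (40 * B ^ 2 * (Δ1 + Δ2)) := by
    have := Real.rpow_pos_of_pos hr2 ((2:ℝ)/7)
    positivity
  have hMp : 0 < M' := by rw [hM']; exact lt_min one_pos hy0
  have hM1 : M' ≤ 1 := by rw [hM']; exact min_le_left _ _
  have hMle : M' ≤ ‖φ ymed‖ ^ 2 * rG ymed ^ ((2:ℝ)/7) / (40 * B ^ 2 * (Δ1 + Δ2)) := by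
    rw [hM']; exact min_le_right _ _
  set w := (p 0 / M') ^ ((1:ℝ)/13) with hw_def
  have hqp : 0 < p 0 / M' := div_pos (hpp 0) hMp
  have hw : 0 < w := Real.rpow_pos_of_pos hqp _
  have hw13 : w ^ 13 = p 0 / M' := by
    rw [hw_def, ← Real.rpow_natCast, ← Real.rpow_mul hqp.le]
    norm_num
  have hp0 : p 0 = M' * w ^ 13 := by
    rw [hw13]
    field_simp
  have h13 : (w ^ 13 : ℝ) = w ^ (13:ℝ) := by norm_cast
  have h14 : (w ^ 14 : ℝ) = w ^ (14:ℝ) := by norm_cast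
  have h6 : (w ^ 6 : ℝ) = w ^ (6:ℝ) := by norm_cast
  have hy : 0 < 21 * ‖φ ymed‖ ^ 2 / (1100 * B ^ 2 * (Δ1 + Δ2)) := by positivity
  have hw14 : w ^ 14 < min 0.01 ((21 * ‖φ ymed‖ ^ 2 / (1100 * B ^ 2 * (Δ1 + Δ2))) ^ ((7:ℝ)/3)) := by
    by_contra hcon
    push Not at hcon
    have h1 := hinit1.trans_le (min_le_left _ _)
    have h2 : (min 0.01 ((21 * ‖φ ymed‖ ^ 2 / (1100 * B ^ 2 * (Δ1 + Δ2))) ^ ((7:ℝ)/3))) ^ ((13:ℝ)/14)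
        ≤ (w ^ 14) ^ ((13:ℝ)/14) :=
      Real.rpow_le_rpow (le_min (by norm_num) (Real.rpow_nonneg hy.le _)) hcon (by norm_num)
    have h3 : (w ^ 14) ^ ((13:ℝ)/14) = w ^ 13 := by
      rw [h14, h13, ← Real.rpow_mul hw.le]
      norm_num
    rw [h3] at h2
    have h4 : p 0 < M' * w ^ 13 := h1.trans_le (mul_le_mul_of_nonneg_left h2 hMp.le)
    linarith
  have hw1 : w ≤ 0.72 := by
    by_contra hcon
    push Not at hcon
    have h1 : (0.72:ℝ) ^ 14 ≤ w ^ 14 := by gcongr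
    have h2 := hw14.trans_le (min_le_left _ _)
    norm_num at h1 h2
    linarith
  have hw6 : w ^ 6 * (B ^ 2 * (Δ1 + Δ2)) ≤ 21 / 1100 * ‖φ ymed‖ ^ 2 := by
    have h1 : w ^ 6 ≤ 21 * ‖φ ymed‖ ^ 2 / (1100 * B ^ 2 * (Δ1 + Δ2)) := by
      by_contra hcon
      push Not at hcon
      have h2 := Real.rpow_le_rpow hy.le hcon.le (by norm_num : (0:ℝ) ≤ 7 / 3)
      have h3 : (w ^ 6) ^ ((7:ℝ)/3) = w ^ 14 := by
        rw [h14, h6, ← Real.rpow_mul hw.le]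
        norm_num
      rw [h3] at h2
      have h4 := hw14.trans_le (min_le_right _ _)
      linarith
    rw [le_div_iff₀ (by positivity)] at h1
    linarith
  have hb0 : 2 * w ^ 7 ≤ b 0 * Δ2 := by
    have h1 := (le_max_left _ _).trans hinit2
    have h2 : 2 * p 0 ^ ((7:ℝ)/13) / (Δ2 * M' ^ ((7:ℝ)/13)) = 2 * w ^ 7 / Δ2 := by
      have h3 : w ^ 7 = p 0 ^ ((7:ℝ)/13) / M' ^ ((7:ℝ)/13) := by
        rw [← Real.div_rpow (hpp 0).le hMp.le, hw_def, ← Real.rpow_natCast, ← Real.rpow_mul hqp.le]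
        norm_num
      rw [h3]
      have := Real.rpow_pos_of_pos hMp ((7:ℝ)/13)
      field_simp
    have h4 : 2 * w ^ 7 / Δ2 ≤ b 0 := by
      rw [← h2]
      exact h1
    rwa [div_le_iff₀ hΔ2p] at h4
  have hb05 : 0.05 * rG ymed ≤ b 0 := (le_max_right _ _).trans hinit2
  have hb01 : b 0 ≤ 0.1 := by
    have : b 0 ≤ 0.1 * rG ymed := hinit3
    linarith
  -- exponents
  have hden : 0 < 26 * (‖φ ymed‖ ^ 2 - s / 2) := by linarith
  have hα0 : 0 ≤ α := by
    rw [hα]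
    exact div_nonneg (by linarith) hden.le
  have hα1 : α ≤ 1 / 13 := by
    rw [hα, div_le_iff₀ hden]
    linarith
  have hAt : A t < 0 := by
    have h1 := hVA t
    have h2 := hε.2
    linarith
  obtain ⟨P, β, hP, hβ, hPle, hβΔ, hfin⟩ := core p m b A S (fun t => ‖g t‖ ^ 2) (‖φ ystar‖ ^ 2)
    (‖φ ymed‖ ^ 2) (-s) B Δ1 Δ2 (1 / 7 + 13 * α / 7) w M' (by positivity) hc (by linarith) hBp haQ hcQ hσQ
    hpp hmp hbp hsum hΔ1p hΔ11 hΔ2p (fun _ => rfl) (by positivity) (by linarith) hS0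
    (fun t => by positivity) hG dp db dA hw hw1 hMp hM1 hp0 hw6 hb0 hb01 t ht hAt
  have hK2 : 1 ≤ 1 + ‖φ ymed‖ ^ 2 * policy φ (θt 0) ymed ^ 2
            / (8 * (‖φ ystar‖ ^ 2 - s) * (rG ystar - expReward φ rG (θt 0))) := by
    have h1 : 0 ≤ rG ystar - expReward φ rG (θt 0) := by
      have e1 : rG ystar - expReward φ rG (θt 0) = Δ1 * (1 - p 0) + b 0 * Δ2 := by
        rw [hVA, hstar]
        simp only [hA_def]
        ring
      rw [e1]
      have h2 : 0 ≤ 1 - p 0 := by linarith [hsum 0, hmp 0, hbp 0]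
      have h3 := hbp 0
      positivity
    have h2 : 0 ≤ ‖φ ystar‖ ^ 2 - s := by
      have : 0 ≤ ‖φ ystar‖ ^ 2 := by positivity
      linarith
    have : 0 ≤ ‖φ ymed‖ ^ 2 * policy φ (θt 0) ymed ^ 2
            / (8 * (‖φ ystar‖ ^ 2 - s) * (rG ystar - expReward φ rG (θt 0))) := by positivity
    linarith
  exact final_rpow (p 0) M' (‖φ ymed‖ ^ 2) (rG ymed) (B ^ 2) (Δ1 + Δ2) Δ2 (b 0) β P _ α K _ w t _
    hp0 hw hMp hr2 (by positivity) hc hcQ (by linarith) hΔ2r hMle hb05 hβ hβΔ rfl hα0 hK hK2 hPle ht hfin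
    (by linarith [Real.exp_pos (-(2 * (Δ1 - ε)))])
end

section
/- Assume the ground truth reward r_G satisfies the reward structure assumption, the initial parameters θ_0 satisfy the initial policy assumption (general-features case), and the feature vectors satisfy the negative-inner-product feature assumption. Let r_P be identical to r_G except that r_P(y_med) = min_{y∈Y_bad} r_G(y), and let ε ∈ (0, Δ1). If θ_t is the gradient flow maximizing V_P, then there exists a time t ≤ (r_G(y_⋆) + 1)² / (ε² (r_P(y_⋆) − V_P(θ_0)) ‖φ(y_⋆)‖²) · π_{θ_0}(y_⋆)^{−1} at which V_G(θ_t) ≥ r_G(y_⋆) − ε. -/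
open scoped BigOperators RealInnerProductSpace

/-- Reciprocal of the policy at `w`. -/
noncomputable def recipPol {Y : Type*} [Fintype Y] {D : ℕ}
    (φ : Y → EuclideanSpace ℝ (Fin D)) (w : Y) (θ : EuclideanSpace ℝ (Fin D)) : ℝ :=
  ∑ z, Real.exp ⟪φ z - φ w, θ⟫

/-- Gradient of `recipPol`. -/
noncomputable def recipGrad {Y : Type*} [Fintype Y] {D : ℕ}
    (φ : Y → EuclideanSpace ℝ (Fin D)) (w : Y) (θ : EuclideanSpace ℝ (Fin D)) :
    EuclideanSpace ℝ (Fin D) :=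
  ∑ z, Real.exp ⟪φ z - φ w, θ⟫ • (φ z - φ w)

lemma recipPol_pos {Y : Type*} [Fintype Y] {D : ℕ}
    (φ : Y → EuclideanSpace ℝ (Fin D)) (w : Y) (θ : EuclideanSpace ℝ (Fin D)) :
    0 < recipPol φ w θ :=
  Finset.sum_pos (fun _ _ => Real.exp_pos _) ⟨w, Finset.mem_univ w⟩

lemma policy_eq_recip {Y : Type*} [Fintype Y] {D : ℕ}
    (φ : Y → EuclideanSpace ℝ (Fin D)) (w : Y) (θ : EuclideanSpace ℝ (Fin D)) :
    policy φ θ w = (recipPol φ w θ)⁻¹ := by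
  have h : recipPol φ w θ = (∑ z, Real.exp ⟪φ z, θ⟫) / Real.exp ⟪φ w, θ⟫ := by
    unfold recipPol
    rw [Finset.sum_div]
    refine Finset.sum_congr rfl fun z _ => ?_
    rw [inner_sub_left, Real.exp_sub]
  rw [h, inv_div, policy]

lemma sum_policy {Y : Type*} [Fintype Y] {D : ℕ}
    (φ : Y → EuclideanSpace ℝ (Fin D)) (w : Y) (θ : EuclideanSpace ℝ (Fin D)) :
    ∑ y, policy φ θ y = 1 := by
  unfold policy
  rw [← Finset.sum_div]
  exact div_self (Finset.sum_pos (fun _ _ => Real.exp_pos _) ⟨w, Finset.mem_univ w⟩).ne'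

lemma policy_nonneg {Y : Type*} [Fintype Y] {D : ℕ}
    (φ : Y → EuclideanSpace ℝ (Fin D)) (w : Y) (θ : EuclideanSpace ℝ (Fin D)) :
    0 ≤ policy φ θ w := by
  rw [policy_eq_recip]; exact (inv_pos.2 (recipPol_pos φ w θ)).le

lemma recipPol_hasGradientAt {Y : Type*} [Fintype Y] {D : ℕ}
    (φ : Y → EuclideanSpace ℝ (Fin D)) (w : Y) (θ : EuclideanSpace ℝ (Fin D)) :
    HasFDerivAt (recipPol φ w) (innerSL ℝ (recipGrad φ w θ)) θ := by
  have h : ∀ z ∈ (Finset.univ : Finset Y),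
      HasFDerivAt (fun θ : EuclideanSpace ℝ (Fin D) => Real.exp ⟪φ z - φ w, θ⟫)
        (Real.exp ⟪φ z - φ w, θ⟫ • innerSL ℝ (φ z - φ w)) θ := by
    intro z _
    exact ((innerSL ℝ (φ z - φ w)).hasFDerivAt (x := θ)).exp
  have h2 := HasFDerivAt.fun_sum h
  refine h2.congr_fderiv ?_
  ext v
  simp [recipGrad, sum_inner, inner_smul_left]

lemma expReward_eq {Y : Type*} [Fintype Y] {D : ℕ}
    (φ : Y → EuclideanSpace ℝ (Fin D)) (w : Y) (r : Y → ℝ) (b : ℝ)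
    (hr : ∀ y, y ≠ w → r y = b) (θ : EuclideanSpace ℝ (Fin D)) :
    expReward φ r θ = b + (r w - b) * (recipPol φ w θ)⁻¹ := by
  classical
  have h : ∀ y, policy φ θ y * r y = policy φ θ y * b +
      if y = w then policy φ θ y * (r w - b) else 0 := by
    intro y
    split_ifs with h
    · subst h; ring
    · rw [hr y h]; ring
  unfold expReward
  rw [Finset.sum_congr rfl fun y _ => h y, Finset.sum_add_distrib, ← Finset.sum_mul,
    sum_policy φ w, Finset.sum_ite_eq' Finset.univ w, ← policy_eq_recip]
  simp; ring

lemma expReward_gradient {Y : Type*} [Fintype Y] {D : ℕ}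
    (φ : Y → EuclideanSpace ℝ (Fin D)) (w : Y) (r : Y → ℝ) (b : ℝ)
    (hr : ∀ y, y ≠ w → r y = b) (θ : EuclideanSpace ℝ (Fin D)) :
    gradient (expReward φ r) θ =
      (-((r w - b) / recipPol φ w θ ^ 2)) • recipGrad φ w θ := by
  have he : expReward φ r = fun θ => b + (r w - b) * (recipPol φ w θ)⁻¹ :=
    funext fun θ => expReward_eq φ w r b hr θ
  apply HasGradientAt.gradient
  rw [he, hasGradientAt_iff_hasFDerivAt]
  have h1 := (hasDerivAt_inv (recipPol_pos φ w θ).ne').comp_hasFDerivAt θ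
    (recipPol_hasGradientAt φ w θ)
  have h2 := (h1.const_mul (r w - b)).const_add b
  refine h2.congr_fderiv ?_
  ext v
  simp [inner_smul_left]
  ring

theorem fast_opt_neg_inner {Y : Type*} [Fintype Y] {D : ℕ}
    (φ : Y → EuclideanSpace ℝ (Fin D)) (hφ : ∀ y, φ y ≠ 0)
    (rG : Y → ℝ) (hrG : ∀ y, rG y ∈ Set.Icc (-1 : ℝ) 1)
    (ystar ymed ybad : Y) (Ybad : Finset Y) (hybad : ybad ∈ Ybad)
    (hsm : ystar ≠ ymed) (hsb : ystar ∉ Ybad) (hmb : ymed ∉ Ybad)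
    (hcover : ∀ y : Y, y = ystar ∨ y = ymed ∨ y ∈ Ybad)
    (hr1 : rG ymed < rG ystar) (hr2 : 0 < rG ymed)
    (hr3 : ∀ y ∈ Ybad, rG y ≤ 0)
    (hr4 : ∀ y ∈ Ybad, rG y = rG ybad)
    (Δ1 Δ2 : ℝ) (hΔ1 : Δ1 = rG ystar - rG ymed) (hΔ2 : Δ2 = rG ymed - rG ybad)
    (s : ℝ) (hs : s = ⟪φ ystar, φ ymed⟫) (hsneg : s < 0)
    (horthbad : ∀ yb ∈ Ybad, ∀ y : Y, y ≠ yb → ⟪φ yb, φ y⟫ = 0)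
    (hnormbad : ∀ yb ∈ Ybad, ‖φ yb‖ ≤ ‖φ ymed‖)
    (rP : Y → ℝ) (hrP : ∀ y, rP y ∈ Set.Icc (-1 : ℝ) 1)
    (hrPeq : ∀ y : Y, y ≠ ymed → rP y = rG y)
    (hrPmed : rP ymed = Finset.inf' Ybad ⟨ybad, hybad⟩ rG)
    (θt : ℝ → EuclideanSpace ℝ (Fin D))
    (hflow : ∀ t : ℝ, 0 ≤ t → HasDerivAt θt (gradient (expReward φ rP) (θt t)) t)
    (B M' : ℝ)
    (hB : B = Finset.univ.sup' ⟨ystar, Finset.mem_univ ystar⟩ fun y => ‖φ y‖)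
    (hM' : M' = min 1 (‖φ ymed‖ ^ 2 * rG ymed ^ ((2:ℝ)/7) / (40 * B ^ 2 * (Δ1 + Δ2))))
    (hinit1 : policy φ (θt 0) ystar
        < min (M' * (min 0.01 ((21 * ‖φ ymed‖ ^ 2 / (1100 * B ^ 2 * (Δ1 + Δ2))) ^ ((7:ℝ)/3))) ^ ((13:ℝ)/14))
            (‖φ ymed‖ / ‖φ ystar‖ * policy φ (θt 0) ymed))
    (hinit2 : max (2 * policy φ (θt 0) ystar ^ ((7:ℝ)/13) / (Δ2 * M' ^ ((7:ℝ)/13)))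
        (0.05 * rG ymed) ≤ ∑ y ∈ Ybad, policy φ (θt 0) y)
    (hinit3 : ∑ y ∈ Ybad, policy φ (θt 0) y ≤ 0.1 * rG ymed)
    (ε : ℝ) (hε : ε ∈ Set.Ioo 0 Δ1) :
    ∃ t : ℝ, 0 ≤ t ∧
      t ≤ (rG ystar + 1) ^ 2
            / (ε ^ 2 * (rP ystar - expReward φ rP (θt 0)) * ‖φ ystar‖ ^ 2)
          * (policy φ (θt 0) ystar)⁻¹ ∧
      rG ystar - ε ≤ expReward φ rG (θt t) := by
  obtain ⟨hε0, hε1⟩ := hε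
  have hrPbad : ∀ y, y ≠ ystar → rP y = rG ybad := by
    intro y hy
    have hm : rP ymed = rG ybad := by
      rw [hrPmed]
      exact le_antisymm (Finset.inf'_le _ hybad)
        (Finset.le_inf' _ _ fun y hy => (hr4 y hy).ge)
    rcases hcover y with h | h | h
    · exact absurd h hy
    · rw [h, hm]
    · rw [hrPeq y (fun h' => hmb (h' ▸ h)), hr4 y h]
  have hPs : rP ystar = rG ystar := hrPeq _ hsm
  have hb1 : -1 ≤ rG ybad := (hrG ybad).1
  have hb0 : rG ybad ≤ 0 := hr3 _ hybad
  set c := rG ystar - rG ybad with hc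
  have hcpos : 0 < c := by linarith
  set q : ℝ → ℝ := fun t => recipPol φ ystar (θt t) with hq
  have hqpos : ∀ t, 0 < q t := fun t => recipPol_pos _ _ _
  have hVP : ∀ t, expReward φ rP (θt t) = rG ybad + c * (q t)⁻¹ := by
    intro t
    rw [expReward_eq φ ystar rP _ hrPbad, hPs]
  have hVGP : ∀ t, expReward φ rP (θt t) ≤ expReward φ rG (θt t) := by
    intro t
    refine Finset.sum_le_sum fun y _ => mul_le_mul_of_nonneg_left ?_ (policy_nonneg _ _ _)
    by_cases h : y = ymed
    · subst h; rw [hrPbad _ hsm.symm]; linarith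
    · rw [hrPeq y h]
  have hN : 0 < ‖φ ystar‖ := norm_pos_iff.2 (hφ _)
  set N := ‖φ ystar‖ with hNdef
  have hq1 : ∀ t, 1 < q t := by
    classical
    intro t
    have h1 : Real.exp ⟪φ ymed - φ ystar, θt t⟫ + Real.exp ⟪φ ystar - φ ystar, θt t⟫ ≤ q t := by
      rw [← Finset.sum_pair (f := fun z => Real.exp ⟪φ z - φ ystar, θt t⟫) hsm.symm]
      exact Finset.sum_le_sum_of_subset_of_nonneg (Finset.subset_univ _)
        fun _ _ _ => (Real.exp_pos _).le
    have h2 := Real.exp_pos ⟪φ ymed - φ ystar, θt t⟫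
    simp only [sub_self, inner_zero_left, Real.exp_zero] at h1
    linarith
  -- norm lower bound on the gradient
  have hG : ∀ t, (q t - 1) * N ≤ ‖recipGrad φ ystar (θt t)‖ := by
    intro t
    have h1 : (q t - 1) * N ^ 2 ≤ -⟪recipGrad φ ystar (θt t), φ ystar⟫ := by
      classical
      have h2 : (q t - 1) * N ^ 2 = ∑ z, (Real.exp ⟪φ z - φ ystar, θt t⟫
          - if z = ystar then 1 else 0) * N ^ 2 := by
        rw [← Finset.sum_mul, Finset.sum_sub_distrib]
        simp [hq, recipPol]
      rw [h2, recipGrad, sum_inner, ← Finset.sum_neg_distrib]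
      refine Finset.sum_le_sum fun z _ => ?_
      rw [real_inner_smul_left, inner_sub_left, inner_sub_left, real_inner_self_eq_norm_sq, ← hNdef]
      by_cases hz : z = ystar
      · rw [hz]
        simp [hNdef]
      · have h3 : ⟪φ z, φ ystar⟫ ≤ 0 := by
          rcases hcover z with h | h | h
          · exact absurd h hz
          · rw [h, real_inner_comm, ← hs]; exact hsneg.le
          · exact (horthbad z h ystar (fun h' => hz h'.symm)).le
        have h4 := Real.exp_pos (⟪φ z, θt t⟫ - ⟪φ ystar, θt t⟫)
        simp only [hz, if_false]
        nlinarith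
    have h5 : -⟪recipGrad φ ystar (θt t), φ ystar⟫ ≤ ‖recipGrad φ ystar (θt t)‖ * N :=
      (neg_le_abs _).trans (abs_real_inner_le_norm _ _)
    have h6 : ((q t - 1) * N) * N ≤ ‖recipGrad φ ystar (θt t)‖ * N := by
      calc _ = (q t - 1) * N ^ 2 := by ring
        _ ≤ _ := h1.trans h5
    exact le_of_mul_le_mul_right h6 hN
  have hder : ∀ t, 0 ≤ t → HasDerivAt q
      (-(c / q t ^ 2 * ‖recipGrad φ ystar (θt t)‖ ^ 2)) t := by
    intro t ht
    have h1 := (recipPol_hasGradientAt φ ystar (θt t)).comp_hasDerivAt t (hflow t ht)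
    refine h1.congr_deriv ?_
    rw [expReward_gradient φ ystar rP _ hrPbad, hPs]
    simp only [innerSL_apply_apply, real_inner_smul_right, real_inner_self_eq_norm_sq]
    ring
  set T := (rG ystar + 1) ^ 2
            / (ε ^ 2 * (rP ystar - expReward φ rP (θt 0)) * N ^ 2)
          * (policy φ (θt 0) ystar)⁻¹ with hT
  have hTb : c / (ε ^ 2 * N ^ 2) * q 0 ≤ T := by
    have hgap : rP ystar - expReward φ rP (θt 0) = c * (1 - (q 0)⁻¹) := by
      rw [hPs, hVP, hc]; ring
    have hi1 : (q 0)⁻¹ < 1 := inv_lt_one_of_one_lt₀ (hq1 0)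
    have hi0 : 0 < (q 0)⁻¹ := inv_pos.2 (hqpos 0)
    rw [hT, hgap, policy_eq_recip, inv_inv]
    refine mul_le_mul_of_nonneg_right ?_ (hqpos 0).le
    have hd : 0 < ε ^ 2 * (c * (1 - (q 0)⁻¹)) * N ^ 2 := by
      have : 0 < 1 - (q 0)⁻¹ := by linarith
      positivity
    rw [div_le_div_iff₀ (by positivity) hd]
    have h1 : c ^ 2 ≤ (rG ystar + 1) ^ 2 := by
      apply pow_le_pow_left₀ hcpos.le; linarith
    have h2 : c ^ 2 * (1 - (q 0)⁻¹) ≤ (rG ystar + 1) ^ 2 := by nlinarith [sq_nonneg c]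
    have h3 : 0 ≤ ε ^ 2 * N ^ 2 := by positivity
    calc c * (ε ^ 2 * (c * (1 - (q 0)⁻¹)) * N ^ 2)
        = c ^ 2 * (1 - (q 0)⁻¹) * (ε ^ 2 * N ^ 2) := by ring
      _ ≤ _ := mul_le_mul_of_nonneg_right h2 h3
  have hT0 : 0 ≤ T := by
    have := hqpos 0
    exact le_trans (by positivity) hTb
  by_contra! hcon
  set k := ε ^ 2 * N ^ 2 / c with hk
  have hkpos : 0 < k := by positivity
  have hqd : ∀ t ∈ Set.Icc 0 T, -(c / q t ^ 2 * ‖recipGrad φ ystar (θt t)‖ ^ 2) ≤ -k := by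
    intro t ht
    have h1 := hcon t ht.1 ht.2
    have h2 := hVGP t
    rw [hVP t] at h2
    have hi0 := hqpos t
    have h3 : ε ≤ c * (1 - (q t)⁻¹) := by linarith
    have h4 : ε * q t ≤ c * (q t - 1) := by
      have := mul_le_mul_of_nonneg_right h3 hi0.le
      have e : c * (1 - (q t)⁻¹) * q t = c * (q t - 1) := by field_simp
      rwa [e] at this
    have h5 : ε * q t * N ≤ c * ‖recipGrad φ ystar (θt t)‖ := by
      calc ε * q t * N ≤ c * (q t - 1) * N := mul_le_mul_of_nonneg_right h4 hN.le
        _ = c * ((q t - 1) * N) := by ring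
        _ ≤ _ := mul_le_mul_of_nonneg_left (hG t) hcpos.le
    have h6 := pow_le_pow_left₀ (by positivity) h5 2
    rw [neg_le_neg_iff, hk, div_mul_eq_mul_div, div_le_div_iff₀ hcpos (by positivity)]
    nlinarith [h6]
  have hanti : AntitoneOn (fun t => q t + k * t) (Set.Icc 0 T) := by
    have hd : ∀ t ∈ Set.Icc 0 T, HasDerivAt (fun t => q t + k * t)
        (-(c / q t ^ 2 * ‖recipGrad φ ystar (θt t)‖ ^ 2) + k * 1) t := fun t ht =>
      (hder t ht.1).add ((hasDerivAt_id t).const_mul k)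
    refine antitoneOn_of_deriv_nonpos (convex_Icc _ _)
      (fun t ht => (hd t ht).continuousAt.continuousWithinAt) ?_ ?_
    · intro t ht
      exact (hd t (interior_subset ht)).differentiableAt.differentiableWithinAt
    · intro t ht
      rw [(hd t (interior_subset ht)).deriv]
      have := hqd t (interior_subset ht)
      linarith
  have hfin := hanti (Set.left_mem_Icc.2 hT0) (Set.right_mem_Icc.2 hT0) hT0
  simp only [mul_zero, add_zero] at hfin
  have h7 : q 0 ≤ k * T := by
    have := mul_le_mul_of_nonneg_left hTb hkpos.le
    have e : k * (c / (ε ^ 2 * N ^ 2) * q 0) = q 0 := by rw [hk]; field_simp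
    rwa [e] at this
  have := hqpos T
  linarith
end
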